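/- arXiv:cs/0207064 — 2 statements merged into one kernel-verified Lean document; each statement's English description precedes it below -/
import Mathlib

section
/- (Interpolation for Circumscription 1.) Let T be a set of propositional formulas, P and Q sets of variables, and φ a formula. If Circ[T;P;Q] ⊨ φ, then the set γ := Cn^{L(T) ∩ (L(φ) ∪ P)}(T) satisfies: γ ⊆ 𝓛(T) ∩ 𝓛(L(φ) ∪ P), T ⊨ γ, and Circ[γ;P;Q] ⊨ φ. In particular there exists a set γ of formulas in 𝓛(T) ∩ 𝓛(L(φ) ∪ P) with T ⊨ γ and Circ[γ;P;Q] ⊨ φ. -/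
namespace NMR

/-- Propositional formulas over a variable type `V`. -/
inductive PropForm (V : Type*) : Type _ where
  | var : V → PropForm V
  | tru : PropForm V
  | fls : PropForm V
  | neg : PropForm V → PropForm V
  | conj : PropForm V → PropForm V → PropForm V
  | disj : PropForm V → PropForm V → PropForm V
  | impl : PropForm V → PropForm V → PropForm V

variable {V : Type*}

/-- Truth value of a formula under a valuation. -/
def PropForm.eval (ν : V → Bool) : PropForm V → Bool
  | .var v => ν v
  | .tru => true
  | .fls => false
  | .neg φ => !(φ.eval ν)
  | .conj φ ψ => φ.eval ν && ψ.eval ν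
  | .disj φ ψ => φ.eval ν || ψ.eval ν
  | .impl φ ψ => !(φ.eval ν) || ψ.eval ν

/-- The set of variables occurring in a formula. -/
def PropForm.vars : PropForm V → Set V
  | .var v => {v}
  | .tru => ∅
  | .fls => ∅
  | .neg φ => φ.vars
  | .conj φ ψ => φ.vars ∪ ψ.vars
  | .disj φ ψ => φ.vars ∪ ψ.vars
  | .impl φ ψ => φ.vars ∪ ψ.vars

/-- `ν ⊨ φ`. -/
def Sat (ν : V → Bool) (φ : PropForm V) : Prop := φ.eval ν = true

/-- `ν ⊨ T` for a set of formulas. -/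
def SatSet (ν : V → Bool) (T : Set (PropForm V)) : Prop := ∀ φ ∈ T, Sat ν φ

/-- `T ⊨ φ`. -/
def Entails (T : Set (PropForm V)) (φ : PropForm V) : Prop :=
  ∀ ν : V → Bool, SatSet ν T → Sat ν φ

/-- `T ⊨ Γ` for a set `Γ`. -/
def EntailsSet (T Γ : Set (PropForm V)) : Prop := ∀ φ ∈ Γ, Entails T φ

/-- A tautology is satisfied by every valuation. -/
def Tautology (φ : PropForm V) : Prop := ∀ ν : V → Bool, Sat ν φ

/-- `L(T)`: the set of variables occurring in a set of formulas. -/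
def varsOf (T : Set (PropForm V)) : Set V := ⋃ φ ∈ T, φ.vars

/-- `𝓛(S)`: the set of formulas all of whose variables lie in `S`. -/
def FormsOver (S : Set V) : Set (PropForm V) := {φ | φ.vars ⊆ S}

/-- `Cn^S(T)`: the formulas in `𝓛(S)` entailed by `T`. -/
def Cn (S : Set V) (T : Set (PropForm V)) : Set (PropForm V) :=
  {φ | φ.vars ⊆ S ∧ Entails T φ}

/-- Two sets of formulas are logically equivalent iff they have the same models. -/
def EquivTheories (T T' : Set (PropForm V)) : Prop :=
  ∀ ν : V → Bool, SatSet ν T ↔ SatSet ν T'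

/-- `ν ≤_{P,Q} ν'`. -/
def circLe (P Q : Set V) (ν ν' : V → Bool) : Prop :=
  (∀ x, x ∉ P ∪ Q → ν x = ν' x) ∧
    {x | x ∈ P ∧ ν x = true} ⊆ {x | x ∈ P ∧ ν' x = true}

/-- `ν <_{P,Q} ν'`. -/
def circLt (P Q : Set V) (ν ν' : V → Bool) : Prop :=
  circLe P Q ν ν' ∧ {x | x ∈ P ∧ ν x = true} ⊂ {x | x ∈ P ∧ ν' x = true}

/-- `ν` is a model of `Circ[T;P;Q]`. -/
def CircModel (T : Set (PropForm V)) (P Q : Set V) (ν : V → Bool) : Prop :=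
  SatSet ν T ∧ ¬ ∃ ν' : V → Bool, SatSet ν' T ∧ circLt P Q ν' ν

/-- `Circ[T;P;Q] ⊨ φ`. -/
def CircEntails (T : Set (PropForm V)) (P Q : Set V) (φ : PropForm V) : Prop :=
  ∀ ν : V → Bool, CircModel T P Q ν → Sat ν φ

theorem eval_congr_vars (φ : PropForm V) (μ ν : V → Bool) (h : ∀ x ∈ φ.vars, μ x = ν x) :
    φ.eval μ = φ.eval ν := by
  induction φ with
  | var v => exact h v rfl
  | tru => rfl
  | fls => rfl
  | neg a iha => simp only [PropForm.eval]; rw [iha h]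
  | conj a b iha ihb =>
    simp only [PropForm.eval]
    rw [iha fun x hx => h x (Or.inl hx), ihb fun x hx => h x (Or.inr hx)]
  | disj a b iha ihb =>
    simp only [PropForm.eval]
    rw [iha fun x hx => h x (Or.inl hx), ihb fun x hx => h x (Or.inr hx)]
  | impl a b iha ihb =>
    simp only [PropForm.eval]
    rw [iha fun x hx => h x (Or.inl hx), ihb fun x hx => h x (Or.inr hx)]

theorem continuous_eval_form (φ : PropForm V) : Continuous fun ν : V → Bool => φ.eval ν := by
  induction φ with
  | var v => exact continuous_apply v
  | tru => exact continuous_const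
  | fls => exact continuous_const
  | neg a iha => exact (continuous_of_discreteTopology (f := Bool.not)).comp iha
  | conj a b iha ihb =>
    exact (continuous_of_discreteTopology (f := fun p : Bool × Bool => p.1 && p.2)).comp
      (iha.prodMk ihb)
  | disj a b iha ihb =>
    exact (continuous_of_discreteTopology (f := fun p : Bool × Bool => p.1 || p.2)).comp
      (iha.prodMk ihb)
  | impl a b iha ihb =>
    exact (continuous_of_discreteTopology (f := fun p : Bool × Bool => !p.1 || p.2)).comp
      (iha.prodMk ihb)

theorem exists_diagram (S : Set V) (ν : V → Bool) (u : Finset S) :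
    ∃ χ : PropForm V, χ.vars ⊆ S ∧ ∀ μ, χ.eval μ = true ↔ ∀ s ∈ u, μ s = ν s := by
  classical
  induction u using Finset.induction_on with
  | empty => exact ⟨.tru, by simp [PropForm.vars], by simp [PropForm.eval]⟩
  | insert a u _ ih =>
    obtain ⟨χ, h1, h2⟩ := ih
    cases hν : ν a with
    | true =>
      refine ⟨.conj (.var a) χ, ?_, fun μ => ?_⟩
      · simp [PropForm.vars, Set.insert_subset_iff, h1]
      · simp only [PropForm.eval, Bool.and_eq_true, h2, Finset.forall_mem_insert, hν]
    | false =>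
      refine ⟨.conj (.neg (.var a)) χ, ?_, fun μ => ?_⟩
      · simp [PropForm.vars, Set.insert_subset_iff, h1]
      · simp only [PropForm.eval, Bool.and_eq_true, h2, Finset.forall_mem_insert, hν,
          Bool.not_eq_true']

theorem exists_model_agree (S : Set V) (T : Set (PropForm V)) (ν : V → Bool)
    (h : SatSet ν (Cn S T)) : ∃ μ, SatSet μ T ∧ ∀ s ∈ S, μ s = ν s := by
  by_contra hne
  have hc : IsClosed {μ : V → Bool | SatSet μ T} := by
    have : {μ : V → Bool | SatSet μ T} = ⋂ ψ ∈ T, {μ | ψ.eval μ = true} := by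
      ext μ; simp [SatSet, Sat]
    rw [this]
    exact isClosed_biInter fun ψ _ => isClosed_eq (continuous_eval_form ψ) continuous_const
  obtain ⟨u, hu⟩ := hc.isCompact.elim_finite_subfamily_closed
    (fun s : S => {μ : V → Bool | μ s = ν s})
    (fun s => isClosed_eq (continuous_apply _) continuous_const) (by
      rw [Set.eq_empty_iff_forall_notMem]
      rintro μ ⟨h1, h2⟩
      exact hne ⟨μ, h1, fun s hs => Set.mem_iInter.1 h2 ⟨s, hs⟩⟩)
  obtain ⟨χ, h1, h2⟩ := exists_diagram S ν u
  have h3 : Sat ν (.neg χ) := by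
    refine h _ ⟨h1, fun μ hμ => ?_⟩
    by_contra hx
    have hx' : χ.eval μ = true := by simpa [Sat, PropForm.eval] using hx
    rw [Set.eq_empty_iff_forall_notMem] at hu
    exact hu μ ⟨hμ, Set.mem_iInter₂.2 ((h2 μ).1 hx')⟩
  have h4 : χ.eval ν = true := (h2 ν).2 fun _ _ => rfl
  simp [Sat, PropForm.eval, h4] at h3

theorem circ1_core (T : Set (PropForm V)) (P Q : Set V)
    (φ : PropForm V) (h : CircEntails T P Q φ) :
    CircEntails (Cn (varsOf T ∩ (φ.vars ∪ P)) T) P Q φ := by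
  classical
  rintro ν ⟨hν, hmin⟩
  obtain ⟨μ, hμ, hag⟩ := exists_model_agree _ T ν hν
  let ν1 : V → Bool := fun x => if x ∈ varsOf T then μ x else ν x
  have hν1 : SatSet ν1 T := fun ψ hψ => by
    have := hμ ψ hψ
    unfold Sat at this ⊢
    rw [← this]
    refine eval_congr_vars _ _ _ fun x hx => if_pos ?_
    exact Set.mem_biUnion hψ hx
  have hag1 : ∀ x ∈ φ.vars ∪ P, ν1 x = ν x := fun x hx => by
    by_cases hxT : x ∈ varsOf T
    · simp only [ν1, if_pos hxT]; exact hag x ⟨hxT, hx⟩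
    · simp only [ν1, if_neg hxT]
  have key : Sat ν1 φ := by
    refine h ν1 ⟨hν1, ?_⟩
    rintro ⟨ν2, h2T, ⟨h2a, -⟩, h2b⟩
    let ν3 : V → Bool := fun x => if x ∈ φ.vars ∪ P then ν2 x else ν x
    have e1 : {x | x ∈ P ∧ ν3 x = true} = {x | x ∈ P ∧ ν2 x = true} := by
      ext x
      refine and_congr_right fun hx => ?_
      have hx' : x ∈ φ.vars ∪ P := Or.inr hx
      simp only [ν3, if_pos hx']
    have e2 : {x | x ∈ P ∧ ν1 x = true} = {x | x ∈ P ∧ ν x = true} := by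
      ext x
      refine and_congr_right fun hx => ?_
      rw [hag1 x (Or.inr hx)]
    have hlt : {x | x ∈ P ∧ ν3 x = true} ⊂ {x | x ∈ P ∧ ν x = true} := by
      rw [e1, ← e2]; exact h2b
    refine hmin ⟨ν3, ?_, ⟨fun x hx => ?_, hlt.subset⟩, hlt⟩
    · rintro ψ ⟨hψ1, hψ2⟩
      have := hψ2 ν2 h2T
      unfold Sat at this ⊢
      rw [← this]
      exact eval_congr_vars _ _ _ fun x hx => if_pos (hψ1 hx).2
    · by_cases hx' : x ∈ φ.vars ∪ P
      · simp only [ν3, if_pos hx']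
        rw [h2a x hx, hag1 x hx']
      · simp only [ν3, if_neg hx']
  unfold Sat at key ⊢
  rw [← key]
  exact eval_congr_vars _ _ _ fun x hx => (hag1 x (Or.inl hx)).symm

/-- Interpolation for Circumscription 1. -/
theorem interpolation_circ1 {V : Type*} (T : Set (PropForm V)) (P Q : Set V)
    (φ : PropForm V) (h : CircEntails T P Q φ) :
    (Cn (varsOf T ∩ (φ.vars ∪ P)) T ⊆
        FormsOver (varsOf T) ∩ FormsOver (φ.vars ∪ P) ∧
      EntailsSet T (Cn (varsOf T ∩ (φ.vars ∪ P)) T) ∧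
      CircEntails (Cn (varsOf T ∩ (φ.vars ∪ P)) T) P Q φ) ∧
    ∃ γ : Set (PropForm V),
      γ ⊆ FormsOver (varsOf T) ∩ FormsOver (φ.vars ∪ P) ∧
      EntailsSet T γ ∧ CircEntails γ P Q φ := by
  have h1 : Cn (varsOf T ∩ (φ.vars ∪ P)) T ⊆
      FormsOver (varsOf T) ∩ FormsOver (φ.vars ∪ P) :=
    fun ψ hψ => ⟨fun x hx => (hψ.1 hx).1, fun x hx => (hψ.1 hx).2⟩
  have h2 : EntailsSet T (Cn (varsOf T ∩ (φ.vars ∪ P)) T) := fun ψ hψ => hψ.2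
  have h3 := circ1_core T P Q φ h
  exact ⟨⟨h1, h2, h3⟩, _, h1, h2, h3⟩

end NMR
end

section
/- (Interpolation Between Theories.) Let T₁ and T₂ be sets of propositional formulas and let P, Q ⊆ L(T₁) ∪ L(T₂) be sets of variables with P ⊆ L(T₁) and P ∪ Q ⊇ L(T₂). Let γ be a set of formulas logically equivalent to Cn^{L(T₁) ∩ L(T₂)}(T₂). Then for every formula φ ∈ 𝓛(T₁): Circ[T₁ ∪ γ;P;Q] ⊨ φ if and only if Circ[T₁ ∪ T₂;P;Q] ⊨ φ. -/
namespace NMR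

variable {V : Type*}

theorem eval_congr' {V : Type*} {μ ν : V → Bool} (φ : PropForm V)
    (h : ∀ x ∈ φ.vars, μ x = ν x) : φ.eval μ = φ.eval ν := by
  induction φ with
  | var v => exact h v rfl
  | tru => rfl
  | fls => rfl
  | neg a iha => simp only [PropForm.eval]; rw [iha h]
  | conj a b iha ihb =>
    simp only [PropForm.eval]
    rw [iha fun x hx => h x (Or.inl hx), ihb fun x hx => h x (Or.inr hx)]
  | disj a b iha ihb =>
    simp only [PropForm.eval]
    rw [iha fun x hx => h x (Or.inl hx), ihb fun x hx => h x (Or.inr hx)]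
  | impl a b iha ihb =>
    simp only [PropForm.eval]
    rw [iha fun x hx => h x (Or.inl hx), ihb fun x hx => h x (Or.inr hx)]

theorem eval_continuous {V : Type*} (φ : PropForm V) :
    Continuous (fun μ : V → Bool => φ.eval μ) := by
  induction φ with
  | var v => exact continuous_apply v
  | tru => exact continuous_const
  | fls => exact continuous_const
  | neg a iha => exact (continuous_of_discreteTopology (f := Bool.not)).comp iha
  | conj a b iha ihb =>
    exact (continuous_of_discreteTopology (f := fun p : Bool × Bool => p.1 && p.2)).comp
      (iha.prodMk ihb)
  | disj a b iha ihb =>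
    exact (continuous_of_discreteTopology (f := fun p : Bool × Bool => p.1 || p.2)).comp
      (iha.prodMk ihb)
  | impl a b iha ihb =>
    exact (continuous_of_discreteTopology (f := fun p : Bool × Bool => !p.1 || p.2)).comp
      (iha.prodMk ihb)

theorem isClosed_sat {V : Type*} (φ : PropForm V) : IsClosed {μ : V → Bool | Sat μ φ} :=
  isClosed_eq (eval_continuous φ) continuous_const

theorem isClosed_satSet {V : Type*} (T : Set (PropForm V)) :
    IsClosed {μ : V → Bool | SatSet μ T} := by
  have : {μ : V → Bool | SatSet μ T} = ⋂ φ ∈ T, {μ | Sat μ φ} := by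
    ext μ; simp [SatSet]
  rw [this]
  exact isClosed_biInter fun φ _ => isClosed_sat φ

/-- A model of `Cn^S(T)` agrees on `S` with some model of `T` (compactness). -/
theorem exists_model_of_cn {V : Type*} (S : Set V) (T : Set (PropForm V)) (ν : V → Bool)
    (h : SatSet ν (Cn S T)) : ∃ μ : V → Bool, SatSet μ T ∧ ∀ x ∈ S, μ x = ν x := by
  let I := {ψ : PropForm V // ψ.vars ⊆ S ∧ Sat ν ψ}
  let C : I → Set (V → Bool) := fun ψ => {μ | SatSet μ T} ∩ {μ | Sat μ ψ.1}
  have hcl : ∀ i, IsClosed (C i) := fun i => (isClosed_satSet T).inter (isClosed_sat i.1)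
  haveI : Nonempty I := ⟨⟨.tru, Set.empty_subset _, rfl⟩⟩
  have hne : (⋂ i, C i).Nonempty := by
    apply IsCompact.nonempty_iInter_of_directed_nonempty_isCompact_isClosed C
    · rintro ⟨a, ha, ha'⟩ ⟨b, hb, hb'⟩
      refine ⟨⟨.conj a b, Set.union_subset ha hb, ?_⟩, ?_, ?_⟩
      · simp only [Sat, PropForm.eval] at *
        simp [ha', hb']
      · rintro μ ⟨h1, h2⟩
        simp only [Sat, PropForm.eval, Set.mem_setOf_eq, Bool.and_eq_true] at h2
        exact ⟨h1, h2.1⟩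
      · rintro μ ⟨h1, h2⟩
        simp only [Sat, PropForm.eval, Set.mem_setOf_eq, Bool.and_eq_true] at h2
        exact ⟨h1, h2.2⟩
    · rintro ⟨a, ha, ha'⟩
      by_contra hcon
      have hn : Sat ν (.neg a) := by
        refine h _ ⟨ha, fun μ hμ => ?_⟩
        by_contra hna
        apply hcon
        refine ⟨μ, hμ, ?_⟩
        simpa [Sat, PropForm.eval] using hna
      simp only [Sat, PropForm.eval] at hn ha'
      simp [ha'] at hn
    · exact fun i => (hcl i).isCompact
    · exact hcl
  obtain ⟨μ, hμ⟩ := hne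
  rw [Set.mem_iInter] at hμ
  refine ⟨μ, (hμ ⟨.tru, Set.empty_subset _, rfl⟩).1, fun x hx => ?_⟩
  have hxS : ({x} : Set V) ⊆ S := Set.singleton_subset_iff.2 hx
  cases hv : ν x with
  | true => exact (hμ ⟨.var x, hxS, hv⟩).2
  | false =>
    have := (hμ ⟨.neg (.var x), hxS, by simp [Sat, PropForm.eval, hv]⟩).2
    simpa [Sat, PropForm.eval] using this

theorem vars_subset_varsOf {V : Type*} {T : Set (PropForm V)} {φ : PropForm V} (h : φ ∈ T) :
    φ.vars ⊆ varsOf T := fun _ hx => Set.mem_biUnion h hx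

theorem satSet_congr {V : Type*} {T : Set (PropForm V)} {μ ν : V → Bool}
    (h : ∀ x ∈ varsOf T, μ x = ν x) (hν : SatSet ν T) : SatSet μ T := fun φ hφ => by
  have := hν φ hφ
  unfold Sat at *
  rw [eval_congr' φ fun x hx => h x (vars_subset_varsOf hφ hx)]
  exact this

/-- Interpolation Between Theories. -/
theorem circ_interpolation_between_theories {V : Type*}
    (T₁ T₂ γ : Set (PropForm V)) (P Q : Set V)
    (hPQ : P ∪ Q ⊆ varsOf T₁ ∪ varsOf T₂) (hP : P ⊆ varsOf T₁)
    (hT₂ : varsOf T₂ ⊆ P ∪ Q)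
    (hγ : EquivTheories γ (Cn (varsOf T₁ ∩ varsOf T₂) T₂)) :
    ∀ φ ∈ FormsOver (varsOf T₁),
      (CircEntails (T₁ ∪ γ) P Q φ ↔ CircEntails (T₁ ∪ T₂) P Q φ) := by
  intro φ hφ
  have down : ∀ ν, SatSet ν (T₁ ∪ T₂) → SatSet ν (T₁ ∪ γ) := by
    rintro ν h ψ (hψ | hψ)
    · exact h ψ (Or.inl hψ)
    · exact (hγ ν).2 (fun χ hχ => hχ.2 ν fun θ hθ => h θ (Or.inr hθ)) ψ hψ
  have up : ∀ ν, SatSet ν (T₁ ∪ γ) → ∃ μ, SatSet μ (T₁ ∪ T₂) ∧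
      (∀ x ∈ varsOf T₁, μ x = ν x) ∧ ∀ x, x ∉ P ∪ Q → μ x = ν x := by
    classical
    intro ν h
    obtain ⟨μ, hμ, hS⟩ := exists_model_of_cn _ _ ν
      ((hγ ν).1 fun ψ hψ => h ψ (Or.inr hψ))
    let ρ : V → Bool := fun x => if x ∈ varsOf T₂ then μ x else ν x
    have h1 : ∀ x ∈ varsOf T₁, ρ x = ν x := by
      intro x hx
      by_cases h2 : x ∈ varsOf T₂
      · simp only [ρ, if_pos h2]; exact hS x ⟨hx, h2⟩
      · simp only [ρ, if_neg h2]
    have h2 : ∀ x ∈ varsOf T₂, ρ x = μ x := fun x hx => by simp only [ρ, if_pos hx]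
    refine ⟨ρ, ?_, h1, fun x hx => ?_⟩
    · rintro ψ (hψ | hψ)
      · exact satSet_congr h1 (fun χ hχ => h χ (Or.inl hχ)) ψ hψ
      · exact satSet_congr h2 hμ ψ hψ
    · have : x ∉ varsOf T₂ := fun hx' => hx (hT₂ hx')
      simp only [ρ, if_neg this]
  have pset : ∀ μ ν : V → Bool, (∀ x ∈ varsOf T₁, μ x = ν x) →
      {x | x ∈ P ∧ μ x = true} = {x | x ∈ P ∧ ν x = true} := by
    intro μ ν h
    ext x
    exact and_congr_right fun hx => by rw [h x (hP hx)]
  constructor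
  · rintro H ν ⟨hν, hmin⟩
    refine H ν ⟨down ν hν, ?_⟩
    rintro ⟨ν', hν', ⟨hfix, hsub⟩, hss⟩
    obtain ⟨μ, hμ, hμ1, hμ2⟩ := up ν' hν'
    have hp := pset μ ν' hμ1
    refine hmin ⟨μ, hμ, ⟨fun x hx => (hμ2 x hx).trans (hfix x hx), ?_⟩, ?_⟩
    · rw [hp]; exact hsub
    · rw [hp]; exact hss
  · rintro H ν ⟨hν, hmin⟩
    obtain ⟨μ, hμ, hμ1, hμ2⟩ := up ν hν
    have hp := pset μ ν hμ1
    have hs : Sat μ φ := by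
      refine H μ ⟨hμ, ?_⟩
      rintro ⟨ν', hν', ⟨hfix, hsub⟩, hss⟩
      rw [hp] at hsub hss
      exact hmin ⟨ν', down ν' hν', ⟨fun x hx => (hfix x hx).trans (hμ2 x hx), hsub⟩, hss⟩
    unfold Sat at *
    rw [← eval_congr' φ fun x hx => hμ1 x (hφ hx)]
    exact hs

end NMR
end
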